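/- Let n ≥ 1 be an integer and let q, α, β, γ, z ∈ ℂ be nonzero. Assume q^j ≠ 1 for all integers 1 ≤ j ≤ n, and assume αβ ≠ q^{i}, αγ ≠ q^{i} and βγ ≠ q^{i} for all integers i with 1−n ≤ i ≤ n−1. Define Σ_{n,1} = ∑_{m=0}^{n} q^{−m} (q^{n+1−m}, q^{1−m}/(γz), q^{1−m}z/γ ; q)_m / (q^{−m}, q^{1−m}/(βγ), q^{1−m}/(αγ) ; q)_m and Σ_{n,2} = ∑_{m=0}^{n} α^{−m}β^{−m}q^{−mn} (q^{n+1−m}, q^{1−m}/(γz), q^{1−m}z/γ ; q)_m / (q^{−m}, q^{1−m}/(βγ), q^{1−m}/(αγ) ; q)_m. Then [(γβ;q)_n/(αβ;q)_n] · Σ_{n,1} = H_n(z;α^{−1},β^{−1},γ^{−1},q^{−1}) and [α^{n}(γβ;q)_n/(γ^{n}(αβ;q)_n)] · Σ_{n,2} = H_n(z;α,β,γ,q). -/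

import Mathlib

/-- The `q`-Pochhammer symbol `(a;q)_m = ∏_{j=0}^{m-1} (1 - a q^j)`. -/
noncomputable def qPoch (a q : ℂ) (m : ℕ) : ℂ := ∏ j ∈ Finset.range m, (1 - a * q ^ j)

/-- The terminating continuous dual `q`-Hahn polynomial
`H_n(z;a,b,c,q) = ∑_{m=0}^{n} (q^{−n};q)_m (az;q)_m (az^{−1};q)_m /
((q;q)_m (ab;q)_m (ac;q)_m) · q^m`. -/
noncomputable def Hn (n : ℕ) (z a b c q : ℂ) : ℂ :=
  ∑ m ∈ Finset.range (n + 1),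
    (qPoch (q ^ (-(n : ℤ))) q m * qPoch (a * z) q m * qPoch (a * z⁻¹) q m) /
      (qPoch q q m * qPoch (a * b) q m * qPoch (a * c) q m) * q ^ m

/-!
The products `(·; q)_m` in `Σ_{n,1}` and `Σ_{n,2}`, read backwards, are products in base `q⁻¹`, so
`Σ_{n,1} = H_n(z; γ⁻¹, β⁻¹, α⁻¹, q⁻¹)`; inverting base and parameters in each factor also gives
`Σ_{n,2} = H_n(z; γ, β, α, q)`. What remains is to interchange `α` and `γ`. The multiple
`p_n = (ab)_n (ac)_n a⁻ⁿ H_n(z; a, b, c, q)` satisfies a three-term recurrence in `n` whose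
coefficients and initial values are symmetric in `a, b, c`, so `p_n` is symmetric too. The
recurrence for `H_n` is obtained by creative telescoping in the summation index.
-/

open Finset

section CommRing

variable {R : Type*} [CommRing R]

/-- The `q`-Pochhammer symbol `(a; q)_m` over a commutative ring; `qPoch` is the case of `ℂ`. -/
def qPochhammer (a q : R) (m : ℕ) : R :=
  ∏ j ∈ range m, (1 - a * q ^ j)

variable (a q : R)

@[simp] lemma qPochhammer_zero : qPochhammer a q 0 = 1 := prod_range_zero _

lemma qPochhammer_succ (m : ℕ) :
    qPochhammer a q (m + 1) = qPochhammer a q m * (1 - a * q ^ m) :=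
  prod_range_succ _ m

lemma qPochhammer_succ' (m : ℕ) :
    qPochhammer a q (m + 1) = (1 - a) * qPochhammer (a * q) q m := by
  simp only [qPochhammer, prod_range_succ', pow_zero, mul_one, pow_succ', mul_assoc, mul_comm]

variable {a q}

lemma qPochhammer_ne_zero_of_le {m n : ℕ} (hmn : m ≤ n) (h : qPochhammer a q n ≠ 0) :
    qPochhammer a q m ≠ 0 :=
  ne_zero_of_dvd_ne_zero h (prod_dvd_prod_of_subset _ _ _ (range_mono hmn))

lemma qPochhammer_ne_zero_iff [IsDomain R] {m : ℕ} :
    qPochhammer a q m ≠ 0 ↔ ∀ j < m, a * q ^ j ≠ 1 := by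
  simp only [qPochhammer, prod_ne_zero_iff, mem_range, sub_ne_zero, ne_comm (a := (1 : R))]

lemma qPochhammer_self_ne_zero [IsDomain R] {n : ℕ} (h : ∀ j : ℕ, 1 ≤ j → j ≤ n → q ^ j ≠ 1) :
    qPochhammer q q n ≠ 0 :=
  qPochhammer_ne_zero_iff.2 fun j hj => by
    rw [← pow_succ']
    exact h (j + 1) (by omega) hj

end CommRing

section Field

variable {K : Type*} [Field K] {x q : K}

lemma qPochhammer_ne_zero_of_ne_zpow {n : ℕ}
    (h : ∀ i : ℤ, 1 - (n : ℤ) ≤ i → i ≤ 0 → x ≠ q ^ i) : qPochhammer x q n ≠ 0 :=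
  qPochhammer_ne_zero_iff.2 fun j hj hx => h (-j) (by omega) (by omega) <| by
    rw [zpow_neg, zpow_natCast]
    exact eq_inv_of_mul_eq_one_left hx

lemma qPochhammer_zpow_neg_eq_zero (hq : q ≠ 0) {n m : ℕ} (h : n < m) :
    qPochhammer (q ^ (-(n : ℤ))) q m = 0 :=
  prod_eq_zero (mem_range.2 h) <| by
    rw [zpow_neg, zpow_natCast, inv_mul_cancel₀ (pow_ne_zero n hq), sub_self]

lemma qPochhammer_eq_mul_qPochhammer_inv (hx : x ≠ 0) (hq : q ≠ 0) (m : ℕ) :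
    qPochhammer x q m = (-x) ^ m * q ^ m.choose 2 * qPochhammer x⁻¹ q⁻¹ m := by
  induction m with
  | zero => simp
  | succ m ih =>
    rw [qPochhammer_succ, qPochhammer_succ, ih, Nat.choose_succ_succ' m 1, Nat.choose_one_right,
      inv_pow]
    field_simp
    ring

lemma qPochhammer_inv_ne_zero (hx : x ≠ 0) (hq : q ≠ 0) {m : ℕ} (h : qPochhammer x q m ≠ 0) :
    qPochhammer x⁻¹ q⁻¹ m ≠ 0 :=
  right_ne_zero_of_mul (qPochhammer_eq_mul_qPochhammer_inv hx hq m ▸ h)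

lemma qPochhammer_zpow_one_sub_mul (hq : q ≠ 0) (x : K) (m : ℕ) :
    qPochhammer (q ^ (1 - (m : ℤ)) * x) q m = qPochhammer x q⁻¹ m := by
  unfold qPochhammer
  rw [← prod_range_reflect]
  refine prod_congr rfl fun j hj => ?_
  have hj := mem_range.1 hj
  have hpow : q ^ (1 - (m : ℤ)) * q ^ (m - 1 - j) = q⁻¹ ^ j := by
    rw [← zpow_natCast, ← zpow_natCast, inv_zpow', ← zpow_add₀ hq]
    congr 1
    omega
  rw [← hpow, mul_right_comm, mul_comm x]

end Field

section DualQHahn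

variable {K : Type*} [Field K]

/-- The terminating continuous dual `q`-Hahn polynomial `H_n(z; a, b, c, q)` over a field; `Hn`
is the case of `ℂ`. -/
def dualQHahn (n : ℕ) (z a b c q : K) : K :=
  ∑ m ∈ range (n + 1),
    (qPochhammer (q ^ (-(n : ℤ))) q m * qPochhammer (a * z) q m * qPochhammer (a * z⁻¹) q m) /
      (qPochhammer q q m * qPochhammer (a * b) q m * qPochhammer (a * c) q m) * q ^ m

/-- The part `(az, a/z; q)_m / (q, ab, ac; q)_m` of the `m`-th coefficient of `H_n(z; a, b, c, q)`
that does not depend on `n`. -/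
def dualQHahnRatio (z a b c q : K) (m : ℕ) : K :=
  qPochhammer (a * z) q m * qPochhammer (a * z⁻¹) q m /
    (qPochhammer q q m * qPochhammer (a * b) q m * qPochhammer (a * c) q m)

/-- The normalization `p_n = (ab; q)_n (ac; q)_n a⁻ⁿ H_n(z; a, b, c, q)`, which is symmetric in
`a`, `b`, `c`. -/
def symmDualQHahn (n : ℕ) (z a b c q : K) : K :=
  qPochhammer (a * b) q n * qPochhammer (a * c) q n / a ^ n * dualQHahn n z a b c q

variable {z a b c q : K}

lemma dualQHahnRatio_succ_mul {m : ℕ} (hqq : qPochhammer q q (m + 1) ≠ 0)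
    (hab : qPochhammer (a * b) q (m + 1) ≠ 0) (hac : qPochhammer (a * c) q (m + 1) ≠ 0) :
    dualQHahnRatio z a b c q (m + 1) *
        ((1 - q ^ (m + 1)) * (1 - a * b * q ^ m) * (1 - a * c * q ^ m)) =
      dualQHahnRatio z a b c q m * ((1 - a * z * q ^ m) * (1 - a * z⁻¹ * q ^ m)) := by
  have hle := m.le_succ
  rw [dualQHahnRatio, dualQHahnRatio, div_mul_eq_mul_div, div_mul_eq_mul_div,
    div_eq_div_iff (mul_ne_zero (mul_ne_zero hqq hab) hac)
      (mul_ne_zero (mul_ne_zero (qPochhammer_ne_zero_of_le hle hqq)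
        (qPochhammer_ne_zero_of_le hle hab)) (qPochhammer_ne_zero_of_le hle hac))]
  simp only [qPochhammer_succ, pow_succ']
  ring

lemma dualQHahn_eq_sum_range (hq : q ≠ 0) {n N : ℕ} (hN : n ≤ N) :
    dualQHahn n z a b c q =
      ∑ m ∈ range (N + 1),
        qPochhammer (q ^ (-(n : ℤ))) q m * (dualQHahnRatio z a b c q m * q ^ m) := by
  rw [← sum_subset (range_mono (Nat.succ_le_succ hN))]
  · exact sum_congr rfl fun m _ => by rw [dualQHahnRatio]; ring
  · intro m _ hm
    rw [qPochhammer_zpow_neg_eq_zero hq (by simpa using hm), zero_mul]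

/-- The combination of `(u/q)_m`, `(u)_m`, `(uq)_m` whose products with `dualQHahnRatio · q^m` have
partial sums in closed form. It encodes the recurrence of `H_n`: for `u = q^{-(n+1)}` the three
symbols are those of `H_{n+2}`, `H_{n+1}`, `H_n`. -/
def dualQHahnTelescopand (z a b c q u : K) (m : ℕ) : K :=
  (1 - a * b / u) * (1 - a * c / u) * (qPochhammer (u / q) q m - qPochhammer u q m) +
    a ^ 2 * (1 - 1 / u) * (1 - b * c / (u * q)) * (qPochhammer (u * q) q m - qPochhammer u q m) +
    (1 - a * z) * (1 - a * z⁻¹) * qPochhammer u q m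

lemma dualQHahnTelescopand_succ_mul_pow (hz : z ≠ 0) (hq : q ≠ 0) {u : K} (hu : u ≠ 0) (m : ℕ) :
    dualQHahnTelescopand z a b c q u (m + 1) * q ^ (m + 1) =
      qPochhammer u q (m + 1) * ((1 - a * z * q ^ (m + 1)) * (1 - a * z⁻¹ * q ^ (m + 1))) -
        qPochhammer u q m * ((1 - q ^ (m + 1)) * (1 - a * b * q ^ m) * (1 - a * c * q ^ m)) := by
  have hlower : qPochhammer (u / q) q (m + 1) = (1 - u / q) * qPochhammer u q m := by
    rw [qPochhammer_succ', div_mul_cancel₀ u hq]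
  -- The coefficient of `(uq)_{m+1}` contains `1 - 1 / u`, which supplies the factor `1 - u` that
  -- turns `(uq)_{m+1}` into `(u)_{m+2}`.
  have hupper : (1 - 1 / u) * qPochhammer (u * q) q (m + 1) =
      -(1 / u) * (qPochhammer u q m * (1 - u * q ^ m) * (1 - u * q ^ (m + 1))) := by
    rw [← qPochhammer_succ, ← qPochhammer_succ, qPochhammer_succ' u]
    field_simp
    ring
  have hsplit : dualQHahnTelescopand z a b c q u (m + 1) =
      (1 - a * b / u) * (1 - a * c / u) *
          (qPochhammer (u / q) q (m + 1) - qPochhammer u q (m + 1)) +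
        a ^ 2 * (1 - b * c / (u * q)) * ((1 - 1 / u) * qPochhammer (u * q) q (m + 1) -
          (1 - 1 / u) * qPochhammer u q (m + 1)) +
        (1 - a * z) * (1 - a * z⁻¹) * qPochhammer u q (m + 1) := by
    rw [dualQHahnTelescopand]
    ring
  rw [hsplit, hupper, hlower, qPochhammer_succ]
  field_simp
  ring

lemma sum_range_dualQHahnTelescopand (hz : z ≠ 0) (hq : q ≠ 0) {u : K} (hu : u ≠ 0) {N : ℕ}
    (hqq : qPochhammer q q N ≠ 0) (hab : qPochhammer (a * b) q N ≠ 0)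
    (hac : qPochhammer (a * c) q N ≠ 0) :
    ∑ m ∈ range (N + 1), dualQHahnTelescopand z a b c q u m * (dualQHahnRatio z a b c q m * q ^ m) =
      qPochhammer u q N * ((1 - a * z * q ^ N) * (1 - a * z⁻¹ * q ^ N)) *
        dualQHahnRatio z a b c q N := by
  induction N with
  | zero => simp [dualQHahnTelescopand, dualQHahnRatio]
  | succ N ih =>
    have hle := N.le_succ
    rw [sum_range_succ, ih (qPochhammer_ne_zero_of_le hle hqq)
      (qPochhammer_ne_zero_of_le hle hab) (qPochhammer_ne_zero_of_le hle hac)]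
    have hstep : dualQHahnTelescopand z a b c q u (N + 1) * q ^ (N + 1) = _ :=
      dualQHahnTelescopand_succ_mul_pow hz hq hu N
    have hratio : dualQHahnRatio z a b c q (N + 1) * _ = _ := dualQHahnRatio_succ_mul hqq hab hac
    linear_combination dualQHahnRatio z a b c q (N + 1) * hstep - qPochhammer u q N * hratio

lemma dualQHahn_recurrence (hz : z ≠ 0) (hq : q ≠ 0) {n : ℕ}
    (hqq : qPochhammer q q (n + 2) ≠ 0) (hab : qPochhammer (a * b) q (n + 2) ≠ 0)
    (hac : qPochhammer (a * c) q (n + 2) ≠ 0) :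
    (1 - a * b * q ^ (n + 1)) * (1 - a * c * q ^ (n + 1)) *
          (dualQHahn (n + 2) z a b c q - dualQHahn (n + 1) z a b c q) +
        a ^ 2 * (1 - q ^ (n + 1)) * (1 - b * c * q ^ n) *
          (dualQHahn n z a b c q - dualQHahn (n + 1) z a b c q) +
        (1 - a * z) * (1 - a * z⁻¹) * dualQHahn (n + 1) z a b c q = 0 := by
  have hlower : q ^ (-((n + 1 : ℕ) : ℤ)) / q = q ^ (-((n + 2 : ℕ) : ℤ)) := by
    rw [div_eq_mul_inv, ← zpow_sub_one₀ hq]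
    rfl
  have hupper : q ^ (-((n + 1 : ℕ) : ℤ)) * q = q ^ (-(n : ℤ)) := by
    rw [← zpow_add_one₀ hq]
    congr 1
    omega
  have hdiv (x : K) (k : ℕ) : x / q ^ (-(k : ℤ)) = x * q ^ k := by
    rw [zpow_neg, zpow_natCast, div_inv_eq_mul]
  have hsum := sum_range_dualQHahnTelescopand hz hq (zpow_ne_zero (-((n + 1 : ℕ) : ℤ)) hq)
    hqq hab hac
  rw [qPochhammer_zpow_neg_eq_zero hq (by omega : n + 1 < n + 2), zero_mul, zero_mul] at hsum
  rw [dualQHahn_eq_sum_range hq le_rfl, dualQHahn_eq_sum_range hq (by omega : n + 1 ≤ n + 2),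
    dualQHahn_eq_sum_range hq (by omega : n ≤ n + 2), ← hsum, ← sum_sub_distrib,
    ← sum_sub_distrib, mul_sum, mul_sum, mul_sum, ← sum_add_distrib, ← sum_add_distrib]
  refine sum_congr rfl fun m _ => ?_
  simp only [dualQHahnTelescopand, hlower, hupper, hdiv, one_mul]
  ring

lemma symmDualQHahn_add_two (hz : z ≠ 0) (hq : q ≠ 0) (ha : a ≠ 0) {n : ℕ}
    (hqq : qPochhammer q q (n + 2) ≠ 0) (hab : qPochhammer (a * b) q (n + 2) ≠ 0)
    (hac : qPochhammer (a * c) q (n + 2) ≠ 0) :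
    symmDualQHahn (n + 2) z a b c q =
      (z + z⁻¹ - (a + b + c) * q ^ (n + 1) +
            a * b * c * (q ^ (2 * n + 2) - q ^ n + q ^ (2 * n + 1))) *
          symmDualQHahn (n + 1) z a b c q -
        (1 - q ^ (n + 1)) * (1 - b * c * q ^ n) * (1 - a * b * q ^ n) * (1 - a * c * q ^ n) *
          symmDualQHahn n z a b c q := by
  have hrec := dualQHahn_recurrence hz hq hqq hab hac
  simp only [symmDualQHahn, qPochhammer_succ]
  field_simp at hrec ⊢
  linear_combination
    qPochhammer (a * b) q n * (1 - a * b * q ^ n) *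
      (qPochhammer (a * c) q n * (1 - a * c * q ^ n)) * a ^ (2 * n + 1) * hrec

lemma symmDualQHahn_zero : symmDualQHahn 0 z a b c q = 1 := by
  simp [symmDualQHahn, dualQHahn]

lemma symmDualQHahn_one (hz : z ≠ 0) (hq : q ≠ 0) (ha : a ≠ 0) (hqq : qPochhammer q q 1 ≠ 0)
    (hab : qPochhammer (a * b) q 1 ≠ 0) (hac : qPochhammer (a * c) q 1 ≠ 0) :
    symmDualQHahn 1 z a b c q = z + z⁻¹ - (a + b + c) + a * b * c := by
  simp only [symmDualQHahn, dualQHahn, sum_range_succ, sum_range_zero, qPochhammer_succ,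
    qPochhammer_zero, zero_add, pow_zero, pow_one, one_mul, mul_one, Nat.cast_one, zpow_neg,
    zpow_one, div_one] at hqq hab hac ⊢
  field_simp
  ring

lemma symmDualQHahn_swap (hz : z ≠ 0) (hq : q ≠ 0) (ha : a ≠ 0) (hc : c ≠ 0) {n : ℕ}
    (hqq : qPochhammer q q n ≠ 0) (hab : qPochhammer (a * b) q n ≠ 0)
    (hac : qPochhammer (a * c) q n ≠ 0) (hcb : qPochhammer (c * b) q n ≠ 0) :
    symmDualQHahn n z a b c q = symmDualQHahn n z c b a q := by
  induction n using Nat.twoStepInduction with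
  | zero => rw [symmDualQHahn_zero, symmDualQHahn_zero]
  | one =>
    rw [symmDualQHahn_one hz hq ha hqq hab hac,
      symmDualQHahn_one hz hq hc hqq hcb (mul_comm a c ▸ hac)]
    ring
  | more n ih ih' =>
    have h₀ : n ≤ n + 2 := by omega
    have h₁ : n + 1 ≤ n + 2 := by omega
    rw [symmDualQHahn_add_two hz hq ha hqq hab hac,
      symmDualQHahn_add_two hz hq hc hqq hcb (mul_comm a c ▸ hac),
      ih (qPochhammer_ne_zero_of_le h₀ hqq) (qPochhammer_ne_zero_of_le h₀ hab)
        (qPochhammer_ne_zero_of_le h₀ hac) (qPochhammer_ne_zero_of_le h₀ hcb),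
      ih' (qPochhammer_ne_zero_of_le h₁ hqq) (qPochhammer_ne_zero_of_le h₁ hab)
        (qPochhammer_ne_zero_of_le h₁ hac) (qPochhammer_ne_zero_of_le h₁ hcb)]
    ring

lemma dualQHahn_swap (hz : z ≠ 0) (hq : q ≠ 0) (ha : a ≠ 0) (hc : c ≠ 0) {n : ℕ}
    (hqq : qPochhammer q q n ≠ 0) (hab : qPochhammer (a * b) q n ≠ 0)
    (hac : qPochhammer (a * c) q n ≠ 0) (hcb : qPochhammer (c * b) q n ≠ 0) :
    a ^ n * qPochhammer (c * b) q n / (c ^ n * qPochhammer (a * b) q n) * dualQHahn n z c b a q =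
      dualQHahn n z a b c q := by
  have hsymm := symmDualQHahn_swap hz hq ha hc hqq hab hac hcb
  simp only [symmDualQHahn, mul_comm c a] at hsymm
  field_simp at hsymm ⊢
  exact hsymm.symm

lemma dualQHahnRatio_inv (hz : z ≠ 0) (ha : a ≠ 0) (hb : b ≠ 0) (hc : c ≠ 0) (hq : q ≠ 0)
    (m : ℕ) :
    dualQHahnRatio z a⁻¹ b⁻¹ c⁻¹ q⁻¹ m =
      (-(q * b * c)) ^ m * q ^ m.choose 2 * dualQHahnRatio z a b c q m := by
  have hz' : a⁻¹ * z = (a * z⁻¹)⁻¹ := by rw [mul_inv, inv_inv]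
  simp only [dualQHahnRatio, hz', ← mul_inv,
    qPochhammer_eq_mul_qPochhammer_inv (mul_ne_zero ha hz) hq,
    qPochhammer_eq_mul_qPochhammer_inv (mul_ne_zero ha (inv_ne_zero hz)) hq,
    qPochhammer_eq_mul_qPochhammer_inv (mul_ne_zero ha hb) hq,
    qPochhammer_eq_mul_qPochhammer_inv (mul_ne_zero ha hc) hq,
    qPochhammer_eq_mul_qPochhammer_inv hq hq]
  simp only [neg_pow (_ * _) m, neg_pow q m, mul_pow, inv_pow]
  field_simp

variable {α β γ : K}

lemma reverse_div_reverse_eq_mul_dualQHahnRatio (hq : q ≠ 0) (n m : ℕ) :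
    (qPochhammer (q ^ ((n : ℤ) + 1 - (m : ℤ))) q m *
          qPochhammer (q ^ (1 - (m : ℤ)) / (γ * z)) q m *
          qPochhammer (q ^ (1 - (m : ℤ)) * z / γ) q m) /
        (qPochhammer (q ^ (-(m : ℤ))) q m * qPochhammer (q ^ (1 - (m : ℤ)) / (β * γ)) q m *
          qPochhammer (q ^ (1 - (m : ℤ)) / (α * γ)) q m) =
      qPochhammer (q⁻¹ ^ (-(n : ℤ))) q⁻¹ m * dualQHahnRatio z γ⁻¹ β⁻¹ α⁻¹ q⁻¹ m := by
  have hn : q ^ ((n : ℤ) + 1 - m) = q ^ (1 - (m : ℤ)) * q⁻¹ ^ (-(n : ℤ)) := by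
    rw [inv_zpow', neg_neg, ← zpow_add₀ hq]
    congr 1
    ring
  have hm : q ^ (-(m : ℤ)) = q ^ (1 - (m : ℤ)) * q⁻¹ := by
    rw [← zpow_sub_one₀ hq]
    congr 1
    ring
  simp only [hn, hm, div_eq_mul_inv _ (γ * z), div_eq_mul_inv _ (β * γ), div_eq_mul_inv _ (α * γ),
    mul_div_assoc _ z γ, qPochhammer_zpow_one_sub_mul hq, dualQHahnRatio]
  rw [mul_comm β, mul_comm α, mul_inv, mul_inv, mul_inv, div_eq_inv_mul z]
  ring

lemma sum_reverse_eq_dualQHahn_inv (hq : q ≠ 0) (n : ℕ) :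
    ∑ m ∈ range (n + 1),
        q ^ (-(m : ℤ)) *
          (qPochhammer (q ^ ((n : ℤ) + 1 - (m : ℤ))) q m *
            qPochhammer (q ^ (1 - (m : ℤ)) / (γ * z)) q m *
            qPochhammer (q ^ (1 - (m : ℤ)) * z / γ) q m) /
          (qPochhammer (q ^ (-(m : ℤ))) q m * qPochhammer (q ^ (1 - (m : ℤ)) / (β * γ)) q m *
            qPochhammer (q ^ (1 - (m : ℤ)) / (α * γ)) q m) =
      dualQHahn n z γ⁻¹ β⁻¹ α⁻¹ q⁻¹ := by
  rw [dualQHahn_eq_sum_range (inv_ne_zero hq) le_rfl]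
  refine sum_congr rfl fun m _ => ?_
  rw [mul_div_assoc, reverse_div_reverse_eq_mul_dualQHahnRatio hq, zpow_neg, zpow_natCast, inv_pow]
  ring

lemma sum_reverse_eq_dualQHahn (hq : q ≠ 0) (hα : α ≠ 0) (hβ : β ≠ 0) (hγ : γ ≠ 0) (hz : z ≠ 0)
    (n : ℕ) :
    ∑ m ∈ range (n + 1),
        α ^ (-(m : ℤ)) * β ^ (-(m : ℤ)) * q ^ (-((m : ℤ) * (n : ℤ))) *
          (qPochhammer (q ^ ((n : ℤ) + 1 - (m : ℤ))) q m *
            qPochhammer (q ^ (1 - (m : ℤ)) / (γ * z)) q m *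
            qPochhammer (q ^ (1 - (m : ℤ)) * z / γ) q m) /
          (qPochhammer (q ^ (-(m : ℤ))) q m * qPochhammer (q ^ (1 - (m : ℤ)) / (β * γ)) q m *
            qPochhammer (q ^ (1 - (m : ℤ)) / (α * γ)) q m) =
      dualQHahn n z γ β α q := by
  rw [dualQHahn_eq_sum_range hq le_rfl]
  refine sum_congr rfl fun m _ => ?_
  have hpow : q ^ (-((m : ℤ) * n)) = (q ^ (-(n : ℤ))) ^ m := by
    rw [← zpow_natCast, ← zpow_mul, neg_mul, mul_comm]
  rw [mul_div_assoc, reverse_div_reverse_eq_mul_dualQHahnRatio hq,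
    dualQHahnRatio_inv hz hγ hβ hα hq, inv_zpow,
    qPochhammer_eq_mul_qPochhammer_inv (zpow_ne_zero _ hq) hq, hpow, zpow_neg α, zpow_neg β,
    zpow_natCast, zpow_natCast, neg_pow (q * β * α), neg_pow (q ^ (-(n : ℤ))), mul_pow, mul_pow]
  field_simp

lemma qPochhammer_div_qPochhammer_eq_inv (hq : q ≠ 0) (hα : α ≠ 0) (hβ : β ≠ 0) (hγ : γ ≠ 0)
    (n : ℕ) :
    qPochhammer (γ * β) q n / qPochhammer (α * β) q n =
      α⁻¹ ^ n * qPochhammer (γ⁻¹ * β⁻¹) q⁻¹ n / (γ⁻¹ ^ n * qPochhammer (α⁻¹ * β⁻¹) q⁻¹ n) := by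
  rw [qPochhammer_eq_mul_qPochhammer_inv (mul_ne_zero hγ hβ) hq,
    qPochhammer_eq_mul_qPochhammer_inv (mul_ne_zero hα hβ) hq, mul_inv, mul_inv, neg_pow (γ * β),
    neg_pow (α * β), mul_pow, mul_pow, inv_pow, inv_pow]
  field_simp

end DualQHahn

theorem stmt8_general {K : Type*} [Field K] (n : ℕ) (q α β γ z : K)
    (hq : q ≠ 0) (hα : α ≠ 0) (hβ : β ≠ 0) (hγ : γ ≠ 0) (hz : z ≠ 0)
    (hq1 : ∀ j : ℕ, 1 ≤ j → j ≤ n → q ^ j ≠ 1)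
    (hαβ : ∀ i : ℤ, 1 - (n : ℤ) ≤ i → i ≤ 0 → α * β ≠ q ^ i)
    (hαγ : ∀ i : ℤ, 1 - (n : ℤ) ≤ i → i ≤ 0 → α * γ ≠ q ^ i)
    (hβγ : ∀ i : ℤ, 1 - (n : ℤ) ≤ i → i ≤ 0 → β * γ ≠ q ^ i) :
    qPochhammer (γ * β) q n / qPochhammer (α * β) q n *
        (∑ m ∈ range (n + 1),
          q ^ (-(m : ℤ)) *
            (qPochhammer (q ^ ((n : ℤ) + 1 - (m : ℤ))) q m *
              qPochhammer (q ^ (1 - (m : ℤ)) / (γ * z)) q m *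
              qPochhammer (q ^ (1 - (m : ℤ)) * z / γ) q m) /
            (qPochhammer (q ^ (-(m : ℤ))) q m * qPochhammer (q ^ (1 - (m : ℤ)) / (β * γ)) q m *
              qPochhammer (q ^ (1 - (m : ℤ)) / (α * γ)) q m))
      = dualQHahn n z α⁻¹ β⁻¹ γ⁻¹ q⁻¹
    ∧ α ^ n * qPochhammer (γ * β) q n / (γ ^ n * qPochhammer (α * β) q n) *
        (∑ m ∈ range (n + 1),
          α ^ (-(m : ℤ)) * β ^ (-(m : ℤ)) * q ^ (-((m : ℤ) * (n : ℤ))) *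
            (qPochhammer (q ^ ((n : ℤ) + 1 - (m : ℤ))) q m *
              qPochhammer (q ^ (1 - (m : ℤ)) / (γ * z)) q m *
              qPochhammer (q ^ (1 - (m : ℤ)) * z / γ) q m) /
            (qPochhammer (q ^ (-(m : ℤ))) q m * qPochhammer (q ^ (1 - (m : ℤ)) / (β * γ)) q m *
              qPochhammer (q ^ (1 - (m : ℤ)) / (α * γ)) q m))
      = dualQHahn n z α β γ q := by
  have hqq := qPochhammer_self_ne_zero hq1
  have hab := qPochhammer_ne_zero_of_ne_zpow hαβ
  have hac := qPochhammer_ne_zero_of_ne_zpow hαγ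
  have hcb := mul_comm β γ ▸ qPochhammer_ne_zero_of_ne_zpow hβγ
  constructor
  · rw [sum_reverse_eq_dualQHahn_inv hq, qPochhammer_div_qPochhammer_eq_inv hq hα hβ hγ]
    apply dualQHahn_swap hz (inv_ne_zero hq) (inv_ne_zero hα) (inv_ne_zero hγ)
      (qPochhammer_inv_ne_zero hq hq hqq) <;> rw [← mul_inv]
    exacts [qPochhammer_inv_ne_zero (mul_ne_zero hα hβ) hq hab,
      qPochhammer_inv_ne_zero (mul_ne_zero hα hγ) hq hac,
      qPochhammer_inv_ne_zero (mul_ne_zero hγ hβ) hq hcb]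
  · rw [sum_reverse_eq_dualQHahn hq hα hβ hγ hz]
    exact dualQHahn_swap hz hq hα hγ hqq hab hac hcb

/-- Equation (5.35) in the proof of Theorem 5.3 of the paper: the sums `Σ_{n,1}`, `Σ_{n,2}`
are, up to explicit prefactors, the continuous dual `q`-Hahn polynomials
`H_n(z;α^{−1},β^{−1},γ^{−1},q^{−1})` and `H_n(z;α,β,γ,q)`. -/
theorem stmt8 (n : ℕ) (hn : 1 ≤ n) (q α β γ z : ℂ)
    (hq : q ≠ 0) (hα : α ≠ 0) (hβ : β ≠ 0) (hγ : γ ≠ 0) (hz : z ≠ 0)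
    (hq1 : ∀ j : ℕ, 1 ≤ j → j ≤ n → q ^ j ≠ 1)
    (hαβ : ∀ i : ℤ, 1 - (n : ℤ) ≤ i → i ≤ (n : ℤ) - 1 → α * β ≠ q ^ i)
    (hαγ : ∀ i : ℤ, 1 - (n : ℤ) ≤ i → i ≤ (n : ℤ) - 1 → α * γ ≠ q ^ i)
    (hβγ : ∀ i : ℤ, 1 - (n : ℤ) ≤ i → i ≤ (n : ℤ) - 1 → β * γ ≠ q ^ i) :
    qPoch (γ * β) q n / qPoch (α * β) q n *
        (∑ m ∈ Finset.range (n + 1),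
          q ^ (-(m : ℤ)) *
            (qPoch (q ^ ((n : ℤ) + 1 - (m : ℤ))) q m *
              qPoch (q ^ (1 - (m : ℤ)) / (γ * z)) q m *
              qPoch (q ^ (1 - (m : ℤ)) * z / γ) q m) /
            (qPoch (q ^ (-(m : ℤ))) q m * qPoch (q ^ (1 - (m : ℤ)) / (β * γ)) q m *
              qPoch (q ^ (1 - (m : ℤ)) / (α * γ)) q m))
      = Hn n z α⁻¹ β⁻¹ γ⁻¹ q⁻¹
    ∧ α ^ n * qPoch (γ * β) q n / (γ ^ n * qPoch (α * β) q n) *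
        (∑ m ∈ Finset.range (n + 1),
          α ^ (-(m : ℤ)) * β ^ (-(m : ℤ)) * q ^ (-((m : ℤ) * (n : ℤ))) *
            (qPoch (q ^ ((n : ℤ) + 1 - (m : ℤ))) q m *
              qPoch (q ^ (1 - (m : ℤ)) / (γ * z)) q m *
              qPoch (q ^ (1 - (m : ℤ)) * z / γ) q m) /
            (qPoch (q ^ (-(m : ℤ))) q m * qPoch (q ^ (1 - (m : ℤ)) / (β * γ)) q m *
              qPoch (q ^ (1 - (m : ℤ)) / (α * γ)) q m))
      = Hn n z α β γ q := by
  exact stmt8_general n q α β γ z hq hα hβ hγ hz hq1 (fun i h h' => hαβ i h (by omega))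
    (fun i h h' => hαγ i h (by omega)) (fun i h h' => hβγ i h (by omega))
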